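/- arXiv:2303.10229 — 4 statements merged into one kernel-verified Lean document; each statement's English description precedes it below -/
import Mathlib

section
/- Let ρ : ℝ² → ℝ be smooth on (0,1)² and of a special form there. Assume that for every nonempty open set U ⊆ (0,1)², neither the partial derivative ρ_s = ∂ρ/∂s nor ρ_t = ∂ρ/∂t vanishes identically on U. Then there exists a nonempty open set U ⊆ (0,1)² on which ρ_s and ρ_t are nowhere zero and on which the mixed second partial derivative ∂²/∂s∂t of the function (s,t) ↦ ln|ρ_s(s,t)/ρ_t(s,t)| vanishes identically. -/
/-- A function `ρ` defined on `(0,1)²` is of a *special form* if there exist nonempty open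
intervals `I₁, I₂ ⊆ (0,1)` and an open interval `I₃ ⊆ ℝ`, and smooth functions
`φ₁ : I₁ → ℝ`, `φ₂ : I₂ → ℝ`, `φ₃ : I₃ → ℝ`, such that for all `s ∈ I₁` and `t ∈ I₂`
one has `φ₁ s + φ₂ t ∈ I₃` and `ρ (s, t) = φ₃ (φ₁ s + φ₂ t)`. -/
def SpecialForm (ρ : ℝ × ℝ → ℝ) : Prop :=
  ∃ a₁ b₁ a₂ b₂ a₃ b₃ : ℝ, ∃ φ₁ φ₂ φ₃ : ℝ → ℝ,
    a₁ < b₁ ∧ a₂ < b₂ ∧ a₃ < b₃ ∧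
    Set.Ioo a₁ b₁ ⊆ Set.Ioo (0 : ℝ) 1 ∧ Set.Ioo a₂ b₂ ⊆ Set.Ioo (0 : ℝ) 1 ∧
    ContDiffOn ℝ (⊤ : ℕ∞) φ₁ (Set.Ioo a₁ b₁) ∧ ContDiffOn ℝ (⊤ : ℕ∞) φ₂ (Set.Ioo a₂ b₂) ∧
    ContDiffOn ℝ (⊤ : ℕ∞) φ₃ (Set.Ioo a₃ b₃) ∧
    ∀ s ∈ Set.Ioo a₁ b₁, ∀ t ∈ Set.Ioo a₂ b₂,
      φ₁ s + φ₂ t ∈ Set.Ioo a₃ b₃ ∧ ρ (s, t) = φ₃ (φ₁ s + φ₂ t)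

/-!
By the chain rule `ρ_s = φ₃'(φ₁ s + φ₂ t) φ₁'(s)` and `ρ_t = φ₃'(φ₁ s + φ₂ t) φ₂'(t)` on the box
where `ρ` has the special form. Where neither vanishes, the common factor `φ₃'` cancels in the
quotient, so `ln |ρ_s / ρ_t| = ln |φ₁'(s)| - ln |φ₂'(t)|` is a function of `s` minus a function
of `t`.
-/

open Set Filter Topology

section Separated

variable {𝕜 E : Type*} [NontriviallyNormedField 𝕜] [NormedAddCommGroup E] [NormedSpace 𝕜 E]
  {F : 𝕜 → 𝕜 → E} {f g : 𝕜 → E} {s t : 𝕜}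

theorem differentiableAt_fst_of_eventuallyEq_sub
    (hF : ∀ᶠ q in 𝓝 (s, t), F q.1 q.2 = f q.1 - g q.2) (hf : DifferentiableAt 𝕜 f s) :
    DifferentiableAt 𝕜 (fun x => F x t) s :=
  (hf.sub_const (g t)).congr_of_eventuallyEq (hF.curry_nhds.mono fun _ h => h.self_of_nhds)

theorem hasDerivAt_deriv_of_eventuallyEq_sub
    (hF : ∀ᶠ q in 𝓝 (s, t), F q.1 q.2 = f q.1 - g q.2) :
    HasDerivAt (fun y => deriv (fun x => F x y) s) 0 t := by
  have hF_swap : ∀ᶠ q in 𝓝 (t, s), F q.2 q.1 = f q.2 - g q.1 :=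
    (continuous_swap.tendsto (t, s)).eventually hF
  -- If `f` is not differentiable at `s`, both sides are the junk value `0`.
  have hconst : (fun y => deriv (fun x => F x y) s) =ᶠ[𝓝 t] fun _ => deriv f s := by
    filter_upwards [hF_swap.curry_nhds] with y hy
    rw [EventuallyEq.deriv_eq hy, deriv_sub_const]
  exact (hasDerivAt_const t (deriv f s)).congr_of_eventuallyEq hconst

end Separated

theorem exists_isOpen_subset_forall_ne_zero {X M : Type*} [TopologicalSpace X]
    [TopologicalSpace M] [T1Space M] [Zero M] {f : X → M} {B : Set X} (hB : IsOpen B)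
    (hf : ContinuousOn f B) (hne : ¬ ∀ x ∈ B, f x = 0) :
    ∃ U ⊆ B, IsOpen U ∧ U.Nonempty ∧ ∀ x ∈ U, f x ≠ 0 := by
  push Not at hne
  exact ⟨B ∩ f ⁻¹' {0}ᶜ, inter_subset_left, hf.isOpen_inter_preimage hB isOpen_ne, hne,
    fun _ hx => hx.2⟩

theorem log_abs_mul_div_mul_left {a b c : ℝ} (ha : c * a ≠ 0) (hb : c * b ≠ 0) :
    Real.log |c * a / (c * b)| = Real.log a - Real.log b := by
  -- `Real.log x` means `ln |x|` for negative `x`, so no signs of `a`, `b`, `c` enter.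
  rw [mul_div_mul_left _ _ (left_ne_zero_of_mul ha), Real.log_abs,
    Real.log_div (right_ne_zero_of_mul ha) (right_ne_zero_of_mul hb)]

/-- `ρ (s, t) = φ₃ (φ₁ s + φ₂ t)` on the box `S ×ˢ T`. This is `SpecialForm` with its data named,
with arbitrary open sets in place of the intervals and `C¹` in place of smooth functions;
`K` plays the role of `I₃`. -/
structure SpecialFormOn {𝕜 : Type*} [NontriviallyNormedField 𝕜] (ρ : 𝕜 × 𝕜 → 𝕜)
    (φ₁ φ₂ φ₃ : 𝕜 → 𝕜) (S T K : Set 𝕜) : Prop where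
  isOpen_left : IsOpen S
  isOpen_right : IsOpen T
  isOpen_outer : IsOpen K
  contDiffOn_left : ContDiffOn 𝕜 1 φ₁ S
  contDiffOn_right : ContDiffOn 𝕜 1 φ₂ T
  contDiffOn_outer : ContDiffOn 𝕜 1 φ₃ K
  mapsTo : MapsTo (fun p : 𝕜 × 𝕜 => φ₁ p.1 + φ₂ p.2) (S ×ˢ T) K
  eqOn : EqOn ρ (fun p => φ₃ (φ₁ p.1 + φ₂ p.2)) (S ×ˢ T)

namespace SpecialFormOn

section Partials

variable {𝕜 : Type*} [NontriviallyNormedField 𝕜] {ρ : 𝕜 × 𝕜 → 𝕜} {φ₁ φ₂ φ₃ : 𝕜 → 𝕜}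
  {S T K : Set 𝕜}

theorem swap (h : SpecialFormOn ρ φ₁ φ₂ φ₃ S T K) :
    SpecialFormOn (ρ ∘ Prod.swap) φ₂ φ₁ φ₃ T S K where
  isOpen_left := h.isOpen_right
  isOpen_right := h.isOpen_left
  isOpen_outer := h.isOpen_outer
  contDiffOn_left := h.contDiffOn_right
  contDiffOn_right := h.contDiffOn_left
  contDiffOn_outer := h.contDiffOn_outer
  mapsTo p hp := by simpa only [add_comm] using h.mapsTo (mk_mem_prod hp.2 hp.1)
  eqOn p hp := by
    simpa only [add_comm, Function.comp_apply, Prod.swap] using h.eqOn (mk_mem_prod hp.2 hp.1)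

theorem deriv_fst_eq (h : SpecialFormOn ρ φ₁ φ₂ φ₃ S T K) {s t : 𝕜} (hs : s ∈ S) (ht : t ∈ T) :
    deriv (fun x => ρ (x, t)) s = deriv φ₃ (φ₁ s + φ₂ t) * deriv φ₁ s := by
  have hρ : (fun x => ρ (x, t)) =ᶠ[𝓝 s] fun x => φ₃ (φ₁ x + φ₂ t) := by
    filter_upwards [h.isOpen_left.mem_nhds hs] with x hx using h.eqOn (mk_mem_prod hx ht)
  have hφ₁ : DifferentiableAt 𝕜 φ₁ s :=
    (h.contDiffOn_left.differentiableOn one_ne_zero).differentiableAt (h.isOpen_left.mem_nhds hs)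
  have hφ₃ : DifferentiableAt 𝕜 φ₃ (φ₁ s + φ₂ t) :=
    (h.contDiffOn_outer.differentiableOn one_ne_zero).differentiableAt
      (h.isOpen_outer.mem_nhds (h.mapsTo (mk_mem_prod hs ht)))
  rw [hρ.deriv_eq]
  exact (hφ₃.hasDerivAt.comp s (hφ₁.hasDerivAt.add_const (φ₂ t))).deriv

theorem deriv_left_ne_zero (h : SpecialFormOn ρ φ₁ φ₂ φ₃ S T K) {s t : 𝕜} (hs : s ∈ S)
    (ht : t ∈ T) (hρs : deriv (fun x => ρ (x, t)) s ≠ 0) : deriv φ₁ s ≠ 0 :=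
  right_ne_zero_of_mul (h.deriv_fst_eq hs ht ▸ hρs)

theorem deriv_snd_eq (h : SpecialFormOn ρ φ₁ φ₂ φ₃ S T K) {s t : 𝕜} (hs : s ∈ S) (ht : t ∈ T) :
    deriv (fun y => ρ (s, y)) t = deriv φ₃ (φ₁ s + φ₂ t) * deriv φ₂ t := by
  rw [add_comm]
  exact h.swap.deriv_fst_eq ht hs

theorem continuousOn_deriv_fst (h : SpecialFormOn ρ φ₁ φ₂ φ₃ S T K) :
    ContinuousOn (fun p : 𝕜 × 𝕜 => deriv (fun s => ρ (s, p.2)) p.1) (S ×ˢ T) := by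
  have hinner : ContinuousOn (fun p : 𝕜 × 𝕜 => φ₁ p.1 + φ₂ p.2) (S ×ˢ T) :=
    (h.contDiffOn_left.continuousOn.comp continuousOn_fst fun _ hp => hp.1).add
      (h.contDiffOn_right.continuousOn.comp continuousOn_snd fun _ hp => hp.2)
  have houter : ContinuousOn (fun p : 𝕜 × 𝕜 => deriv φ₃ (φ₁ p.1 + φ₂ p.2)) (S ×ˢ T) :=
    (h.contDiffOn_outer.continuousOn_deriv_of_isOpen h.isOpen_outer le_rfl).comp hinner h.mapsTo
  have hleft : ContinuousOn (fun p : 𝕜 × 𝕜 => deriv φ₁ p.1) (S ×ˢ T) :=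
    (h.contDiffOn_left.continuousOn_deriv_of_isOpen h.isOpen_left le_rfl).comp continuousOn_fst
      fun _ hp => hp.1
  exact (houter.mul hleft).congr fun p hp => h.deriv_fst_eq hp.1 hp.2

theorem continuousOn_deriv_snd (h : SpecialFormOn ρ φ₁ φ₂ φ₃ S T K) :
    ContinuousOn (fun p : 𝕜 × 𝕜 => deriv (fun t => ρ (p.1, t)) p.2) (S ×ˢ T) :=
  h.swap.continuousOn_deriv_fst.comp continuous_swap.continuousOn fun _ hp => ⟨hp.2, hp.1⟩

end Partials

theorem log_abs_deriv_div_deriv {ρ : ℝ × ℝ → ℝ} {φ₁ φ₂ φ₃ : ℝ → ℝ} {S T K : Set ℝ}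
    (h : SpecialFormOn ρ φ₁ φ₂ φ₃ S T K) {s t : ℝ} (hs : s ∈ S) (ht : t ∈ T)
    (hρs : deriv (fun x => ρ (x, t)) s ≠ 0) (hρt : deriv (fun y => ρ (s, y)) t ≠ 0) :
    Real.log |deriv (fun x => ρ (x, t)) s / deriv (fun y => ρ (s, y)) t| =
      Real.log (deriv φ₁ s) - Real.log (deriv φ₂ t) := by
  rw [h.deriv_fst_eq hs ht] at hρs ⊢
  rw [h.deriv_snd_eq hs ht] at hρt ⊢
  exact log_abs_mul_div_mul_left hρs hρt

end SpecialFormOn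

theorem SpecialForm.exists_specialFormOn {ρ : ℝ × ℝ → ℝ} (h : SpecialForm ρ) :
    ∃ S ⊆ Ioo (0 : ℝ) 1, ∃ T ⊆ Ioo (0 : ℝ) 1, ∃ (K : Set ℝ) (φ₁ φ₂ φ₃ : ℝ → ℝ),
      S.Nonempty ∧ T.Nonempty ∧ DifferentiableOn ℝ (deriv φ₁) S ∧
        SpecialFormOn ρ φ₁ φ₂ φ₃ S T K := by
  obtain ⟨a₁, b₁, a₂, b₂, a₃, b₃, φ₁, φ₂, φ₃, hab₁, hab₂, -, hI₁, hI₂, hφ₁, hφ₂, hφ₃, hρ⟩ := h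
  have one_le_top : (1 : WithTop ℕ∞) ≤ (⊤ : ℕ∞) := by exact_mod_cast le_top
  refine ⟨Ioo a₁ b₁, hI₁, Ioo a₂ b₂, hI₂, Ioo a₃ b₃, φ₁, φ₂, φ₃, nonempty_Ioo.2 hab₁,
    nonempty_Ioo.2 hab₂, ?_, ?_⟩
  · exact (hφ₁.deriv_of_isOpen (m := (⊤ : ℕ∞)) isOpen_Ioo le_rfl).differentiableOn (by simp)
  · exact ⟨isOpen_Ioo, isOpen_Ioo, isOpen_Ioo, hφ₁.of_le one_le_top, hφ₂.of_le one_le_top,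
      hφ₃.of_le one_le_top, fun p hp => (hρ p.1 hp.1 p.2 hp.2).1,
      fun p hp => (hρ p.1 hp.1 p.2 hp.2).2⟩

theorem derivative_test_general {ρ : ℝ × ℝ → ℝ} {φ₁ φ₂ φ₃ : ℝ → ℝ} {S T K : Set ℝ}
    (h : SpecialFormOn ρ φ₁ φ₂ φ₃ S T K) (hS : S.Nonempty) (hT : T.Nonempty)
    (hφ₁ : DifferentiableOn ℝ (deriv φ₁) S)
    (hnonzero : ∀ U ⊆ S ×ˢ T, IsOpen U → U.Nonempty →
      (¬ ∀ p ∈ U, deriv (fun s => ρ (s, p.2)) p.1 = 0) ∧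
      (¬ ∀ p ∈ U, deriv (fun t => ρ (p.1, t)) p.2 = 0)) :
    ∃ U ⊆ S ×ˢ T, IsOpen U ∧ U.Nonempty ∧
      (∀ p ∈ U, deriv (fun s => ρ (s, p.2)) p.1 ≠ 0 ∧ deriv (fun t => ρ (p.1, t)) p.2 ≠ 0) ∧
      ∀ p ∈ U,
        DifferentiableAt ℝ (fun s =>
          Real.log |deriv (fun s' => ρ (s', p.2)) s / deriv (fun t' => ρ (s, t')) p.2|) p.1 ∧
        HasDerivAt (fun t => deriv (fun s =>
          Real.log |deriv (fun s' => ρ (s', t)) s / deriv (fun t' => ρ (s, t')) t|) p.1)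
          0 p.2 := by
  have hbox : IsOpen (S ×ˢ T) := h.isOpen_left.prod h.isOpen_right
  obtain ⟨V, hV_sub, hV, hV_ne, hρs⟩ := exists_isOpen_subset_forall_ne_zero hbox
    h.continuousOn_deriv_fst (hnonzero _ Subset.rfl hbox (hS.prod hT)).1
  obtain ⟨U, hUV, hU, hU_ne, hρt⟩ := exists_isOpen_subset_forall_ne_zero hV
    (h.continuousOn_deriv_snd.mono hV_sub) (hnonzero V hV_sub hV hV_ne).2
  have hU_sub : U ⊆ S ×ˢ T := hUV.trans hV_sub
  refine ⟨U, hU_sub, hU, hU_ne, fun p hp => ⟨hρs p (hUV hp), hρt p hp⟩, fun p hp => ?_⟩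
  let F : ℝ → ℝ → ℝ := fun s t =>
    Real.log |deriv (fun x => ρ (x, t)) s / deriv (fun y => ρ (s, y)) t|
  let f : ℝ → ℝ := fun s => Real.log (deriv φ₁ s)
  let g : ℝ → ℝ := fun t => Real.log (deriv φ₂ t)
  have hsplit : ∀ᶠ q in 𝓝 p, F q.1 q.2 = f q.1 - g q.2 := by
    filter_upwards [hU.mem_nhds hp] with q hq
    exact h.log_abs_deriv_div_deriv (hU_sub hq).1 (hU_sub hq).2 (hρs q (hUV hq)) (hρt q hq)
  have hφ₁_ne : deriv φ₁ p.1 ≠ 0 :=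
    h.deriv_left_ne_zero (hU_sub hp).1 (hU_sub hp).2 (hρs p (hUV hp))
  have hf : DifferentiableAt ℝ f p.1 :=
    (hφ₁.differentiableAt (h.isOpen_left.mem_nhds (hU_sub hp).1)).log hφ₁_ne
  exact ⟨differentiableAt_fst_of_eventuallyEq_sub hsplit hf,
    hasDerivAt_deriv_of_eventuallyEq_sub hsplit⟩

theorem derivative_test (ρ : ℝ × ℝ → ℝ)
    (hsmooth : ContDiffOn ℝ (⊤ : ℕ∞) ρ (Set.Ioo (0 : ℝ) 1 ×ˢ Set.Ioo (0 : ℝ) 1))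
    (hspec : SpecialForm ρ)
    (hnonzero : ∀ U ⊆ Set.Ioo (0 : ℝ) 1 ×ˢ Set.Ioo (0 : ℝ) 1, IsOpen U → U.Nonempty →
      (¬ ∀ p ∈ U, deriv (fun s => ρ (s, p.2)) p.1 = 0) ∧
      (¬ ∀ p ∈ U, deriv (fun t => ρ (p.1, t)) p.2 = 0)) :
    ∃ U ⊆ Set.Ioo (0 : ℝ) 1 ×ˢ Set.Ioo (0 : ℝ) 1, IsOpen U ∧ U.Nonempty ∧
      (∀ p ∈ U, deriv (fun s => ρ (s, p.2)) p.1 ≠ 0 ∧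
        deriv (fun t => ρ (p.1, t)) p.2 ≠ 0) ∧
      ∀ p ∈ U, deriv (fun t =>
          deriv (fun s =>
            Real.log |deriv (fun s' => ρ (s', t)) s / deriv (fun t' => ρ (s, t')) t|) p.1)
        p.2 = 0 := by
  obtain ⟨S, hS, T, hT, K, φ₁, φ₂, φ₃, hS_ne, hT_ne, hφ₁, h⟩ := hspec.exists_specialFormOn
  have hbox := prod_mono hS hT
  obtain ⟨U, hU_sub, hU, hU_ne, hU_nonzero, hU_mixed⟩ := derivative_test_general h hS_ne hT_ne hφ₁
    fun V hV => hnonzero V (hV.trans hbox)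
  exact ⟨U, hU_sub.trans hbox, hU, hU_ne, hU_nonzero, fun p hp => (hU_mixed p hp).2.deriv⟩
end

section
/- Let γ₁, γ₂ : (0,1) → ℝ³ be smooth injective maps and let ρ(s,t) = ‖γ₁(s) − γ₂(t)‖² be their distance function. If ρ is of a special form, then for all positive integers m and n there exist finite sets P₁ ⊆ range γ₁ and P₂ ⊆ range γ₂ with |P₁| = m, |P₂| = n and D(P₁,P₂) ≤ m + n. -/
/-!
Suppose `ρ(s,t) = φ₃(φ₁(s) + φ₂(t))` on `I₁ × I₂`. If `φ₁` and `φ₂` are both nonconstant, their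
images contain nondegenerate segments, hence arithmetic progressions of lengths `m` and `n` with a
common step. The sums of terms of these progressions form a progression of length `m + n - 1`, so
preimages of the terms span at most that many distances. If `φ₁` is constant, the distance depends
on `t` alone and arbitrary points span at most `n` distances; symmetrically for `φ₂`.
-/

/-- The number of distinct distances spanned by pairs of the two finite point sets. -/
noncomputable def distinctDists (P₁ P₂ : Finset (EuclideanSpace ℝ (Fin 3))) : ℕ :=
  ((P₁ ×ˢ P₂).image fun pq => dist pq.1 pq.2).card

open Finset
open scoped Pointwise

/-- The set of terms of the arithmetic progression with first term `a`, step `d` and length `n`.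
Two progressions with a common step have a small sumset. The terms may coincide, so the set can have
fewer than `n` elements. -/
def arithProg {M : Type*} [AddMonoid M] [DecidableEq M] (a d : M) (n : ℕ) : Finset M :=
  (range n).image fun i ↦ a + i • d

section AddCommMonoid

variable {M : Type*} [AddCommMonoid M] [DecidableEq M]

lemma arithProg_add_arithProg_subset (a b d : M) (m n : ℕ) :
    arithProg a d m + arithProg b d n ⊆ arithProg (a + b) d (m + n - 1) := by
  simp only [arithProg, add_subset_iff, mem_image, mem_range]
  rintro _ ⟨i, hi, rfl⟩ _ ⟨j, hj, rfl⟩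
  exact ⟨i + j, by lia, by rw [add_nsmul, add_add_add_comm]⟩

lemma card_arithProg_add_arithProg_le (a b d : M) (m n : ℕ) :
    #(arithProg a d m + arithProg b d n) ≤ m + n - 1 :=
  calc
    #(arithProg a d m + arithProg b d n) ≤ #(arithProg (a + b) d (m + n - 1)) :=
      card_le_card (arithProg_add_arithProg_subset a b d m n)
    _ ≤ #(range (m + n - 1)) := card_image_le
    _ = m + n - 1 := card_range _

end AddCommMonoid

lemma card_add_le_of_card_le_one {M : Type*} [Add M] [IsCancelAdd M] [DecidableEq M]
    {A B : Finset M} (h : #A ≤ 1 ∨ #B ≤ 1) : #(A + B) ≤ #A + #B - 1 := by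
  rcases h with h | h <;> rcases Nat.le_one_iff_eq_zero_or_eq_one.mp h with h | h
  · simp [card_eq_zero.mp h]
  · obtain ⟨a, rfl⟩ := card_eq_one.mp h
    simp
  · simp [card_eq_zero.mp h]
  · obtain ⟨b, rfl⟩ := card_eq_one.mp h
    simp

lemma card_arithProg {M : Type*} [AddCommMonoid M] [LinearOrder M] [IsOrderedCancelAddMonoid M]
    (a : M) {d : M} (hd : 0 < d) (n : ℕ) : #(arithProg a d n) = n := by
  have hinj : Function.Injective fun i : ℕ ↦ a + i • d :=
    (add_right_injective a).comp (nsmul_left_strictMono hd).injective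
  rw [arithProg, card_image_of_injective _ hinj, card_range]

lemma arithProg_subset_Icc {M : Type*} [AddCommMonoid M] [PartialOrder M] [IsOrderedAddMonoid M]
    [DecidableEq M] {a b d : M} {n : ℕ} (hd : 0 ≤ d) (h : a + n • d ≤ b) :
    (arithProg a d n : Set M) ⊆ Set.Icc a b := by
  intro x hx
  obtain ⟨i, hi, rfl⟩ := mem_image.mp (mem_coe.mp hx)
  have hin : i • d ≤ n • d := nsmul_le_nsmul_left hd (mem_range.mp hi).le
  exact ⟨le_add_of_nonneg_right (nsmul_nonneg hd i), (add_le_add_right hin a).trans h⟩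

lemma exists_finset_subset_Icc_card_add_le {G : Type*} [AddCommGroup G] [LinearOrder G]
    [IsOrderedAddMonoid G] [DenselyOrdered G] {a b c d : G} (hab : a < b) (hcd : c < d)
    (m n : ℕ) :
    ∃ A B : Finset G, ↑A ⊆ Set.Icc a b ∧ ↑B ⊆ Set.Icc c d ∧ #A = m ∧ #B = n ∧
      #(A + B) ≤ m + n - 1 := by
  obtain ⟨e, he, hlt⟩ :=
    exists_nsmul_lt_of_pos (lt_min (sub_pos.mpr hab) (sub_pos.mpr hcd)) (max m n)
  have hm : m • e ≤ b - a := calc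
    m • e ≤ max m n • e := nsmul_le_nsmul_left he.le (le_max_left m n)
    _ ≤ b - a := hlt.le.trans (min_le_left _ _)
  have hn : n • e ≤ d - c := calc
    n • e ≤ max m n • e := nsmul_le_nsmul_left he.le (le_max_right m n)
    _ ≤ d - c := hlt.le.trans (min_le_right _ _)
  exact ⟨arithProg a e m, arithProg c e n,
    arithProg_subset_Icc he.le (le_sub_iff_add_le'.mp hm),
    arithProg_subset_Icc he.le (le_sub_iff_add_le'.mp hn),
    card_arithProg a he m, card_arithProg c he n, card_arithProg_add_arithProg_le a c e m n⟩

lemma exists_Icc_subset_image_of_isPreconnected {X L : Type*} [TopologicalSpace X] [LinearOrder L]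
    [TopologicalSpace L] [OrderClosedTopology L] {s : Set X} {f : X → L} (hs : IsPreconnected s)
    (hf : ContinuousOn f s) (hnt : (f '' s).Nontrivial) :
    ∃ a b, a < b ∧ Set.Icc a b ⊆ f '' s := by
  obtain ⟨_, ⟨x, hx, rfl⟩, _, ⟨y, hy, rfl⟩, hlt⟩ := hnt.exists_lt
  exact ⟨f x, f y, hlt, hs.intermediate_value hx hy hf⟩

lemma card_image_le_one_of_subsingleton {α β : Type*} [DecidableEq β] {f : α → β} {s : Set α}
    {S : Finset α} (hS : ↑S ⊆ s) (hf : (f '' s).Subsingleton) : #(S.image f) ≤ 1 :=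
  card_le_one_iff_subsingleton.mpr <| hf.anti <| by
    rw [coe_image]
    exact Set.image_mono hS

section Preconnected

variable {X Y G : Type*} [TopologicalSpace X] [TopologicalSpace Y] [AddCommGroup G] [LinearOrder G]
  [IsOrderedAddMonoid G] [DenselyOrdered G] [TopologicalSpace G] [OrderClosedTopology G]
  {s : Set X} {t : Set Y} {φ : X → G} {ψ : Y → G}

lemma exists_finset_card_image_add_image_le_of_nontrivial (hs : IsPreconnected s)
    (ht : IsPreconnected t) (hφ : ContinuousOn φ s) (hψ : ContinuousOn ψ t)
    (hφs : (φ '' s).Nontrivial) (hψt : (ψ '' t).Nontrivial) (m n : ℕ) :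
    ∃ (S : Finset X) (T : Finset Y), ↑S ⊆ s ∧ ↑T ⊆ t ∧ #S = m ∧ #T = n ∧
      #(S.image φ + T.image ψ) ≤ m + n - 1 := by
  obtain ⟨a, b, hab, habφ⟩ := exists_Icc_subset_image_of_isPreconnected hs hφ hφs
  obtain ⟨c, d, hcd, hcdψ⟩ := exists_Icc_subset_image_of_isPreconnected ht hψ hψt
  obtain ⟨A, B, hA, hB, rfl, rfl, hAB⟩ := exists_finset_subset_Icc_card_add_le hab hcd m n
  obtain ⟨S, hS, hSinj, rfl⟩ := exists_subset_injOn_image_eq_of_surjOn s A (hA.trans habφ)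
  obtain ⟨T, hT, hTinj, rfl⟩ := exists_subset_injOn_image_eq_of_surjOn t B (hB.trans hcdψ)
  exact ⟨S, T, hS, hT, (card_image_of_injOn hSinj).symm, (card_image_of_injOn hTinj).symm, hAB⟩

lemma exists_finset_card_image_add_image_le (hs : IsPreconnected s) (ht : IsPreconnected t)
    (hs_inf : s.Infinite) (ht_inf : t.Infinite) (hφ : ContinuousOn φ s) (hψ : ContinuousOn ψ t)
    (m n : ℕ) :
    ∃ (S : Finset X) (T : Finset Y), ↑S ⊆ s ∧ ↑T ⊆ t ∧ #S = m ∧ #T = n ∧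
      #(S.image φ + T.image ψ) ≤ m + n - 1 := by
  by_cases h : (φ '' s).Nontrivial ∧ (ψ '' t).Nontrivial
  · exact exists_finset_card_image_add_image_le_of_nontrivial hs ht hφ hψ h.1 h.2 m n
  obtain ⟨S, hS, rfl⟩ := hs_inf.exists_subset_card_eq m
  obtain ⟨T, hT, rfl⟩ := ht_inf.exists_subset_card_eq n
  rw [not_and_or, Set.not_nontrivial_iff, Set.not_nontrivial_iff] at h
  refine ⟨S, T, hS, hT, rfl, rfl, (card_add_le_of_card_le_one ?_).trans ?_⟩
  · exact h.imp (card_image_le_one_of_subsingleton hS) (card_image_le_one_of_subsingleton hT)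
  · gcongr <;> exact card_image_le

lemma exists_finset_card_image₂_le {α : Type*} [DecidableEq α] {F : X → Y → α} {g : G → α}
    (hs : IsPreconnected s) (ht : IsPreconnected t) (hs_inf : s.Infinite) (ht_inf : t.Infinite)
    (hφ : ContinuousOn φ s) (hψ : ContinuousOn ψ t)
    (hF : ∀ x ∈ s, ∀ y ∈ t, F x y = g (φ x + ψ y)) (m n : ℕ) :
    ∃ (S : Finset X) (T : Finset Y), ↑S ⊆ s ∧ ↑T ⊆ t ∧ #S = m ∧ #T = n ∧
      #(image₂ F S T) ≤ m + n - 1 := by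
  obtain ⟨S, T, hS, hT, hSm, hTn, hST⟩ :=
    exists_finset_card_image_add_image_le hs ht hs_inf ht_inf hφ hψ m n
  have hsub : image₂ F S T ⊆ (S.image φ + T.image ψ).image g := image₂_subset_iff.mpr
    fun x hx y hy ↦ by
      rw [hF x (hS hx) y (hT hy)]
      exact mem_image_of_mem g (add_mem_add (mem_image_of_mem φ hx) (mem_image_of_mem ψ hy))
  exact ⟨S, T, hS, hT, hSm, hTn, (card_le_card hsub).trans (card_image_le.trans hST)⟩

theorem special_form_implies_few_distances_general {E : Type*} [PseudoMetricSpace E]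
    {γ₁ : X → E} {γ₂ : Y → E} {f : G → ℝ} (hs : IsPreconnected s) (ht : IsPreconnected t)
    (hs_inf : s.Infinite) (ht_inf : t.Infinite) (hγ₁ : Set.InjOn γ₁ s) (hγ₂ : Set.InjOn γ₂ t)
    (hφ : ContinuousOn φ s) (hψ : ContinuousOn ψ t)
    (hdist : ∀ x ∈ s, ∀ y ∈ t, dist (γ₁ x) (γ₂ y) = f (φ x + ψ y)) (m n : ℕ) :
    ∃ P₁ P₂ : Finset E, ↑P₁ ⊆ γ₁ '' s ∧ ↑P₂ ⊆ γ₂ '' t ∧ #P₁ = m ∧ #P₂ = n ∧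
      #((P₁ ×ˢ P₂).image fun pq ↦ dist pq.1 pq.2) ≤ m + n - 1 := by
  classical
  obtain ⟨S, T, hS, hT, hSm, hTn, hST⟩ :=
    exists_finset_card_image₂_le hs ht hs_inf ht_inf hφ hψ hdist m n
  refine ⟨S.image γ₁, T.image γ₂, ?_, ?_, ?_, ?_, ?_⟩
  · simpa only [coe_image] using Set.image_mono hS
  · simpa only [coe_image] using Set.image_mono hT
  · rw [card_image_of_injOn (hγ₁.mono hS), hSm]
  · rw [card_image_of_injOn (hγ₂.mono hT), hTn]
  · change #(image₂ dist (S.image γ₁) (T.image γ₂)) ≤ m + n - 1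
    rwa [image₂_image_left, image₂_image_right]

end Preconnected

theorem special_form_implies_few_distances
    (γ₁ γ₂ : ℝ → EuclideanSpace ℝ (Fin 3))
    (hγ₁ : ContDiffOn ℝ (⊤ : ℕ∞) γ₁ (Set.Ioo (0 : ℝ) 1))
    (hγ₂ : ContDiffOn ℝ (⊤ : ℕ∞) γ₂ (Set.Ioo (0 : ℝ) 1))
    (hinj₁ : Set.InjOn γ₁ (Set.Ioo (0 : ℝ) 1))
    (hinj₂ : Set.InjOn γ₂ (Set.Ioo (0 : ℝ) 1))
    (hspec : SpecialForm fun p => ‖γ₁ p.1 - γ₂ p.2‖ ^ 2) :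
    ∀ m n : ℕ, 0 < m → 0 < n →
      ∃ P₁ P₂ : Finset (EuclideanSpace ℝ (Fin 3)),
        ↑P₁ ⊆ γ₁ '' Set.Ioo (0 : ℝ) 1 ∧ ↑P₂ ⊆ γ₂ '' Set.Ioo (0 : ℝ) 1 ∧
        P₁.card = m ∧ P₂.card = n ∧
        distinctDists P₁ P₂ ≤ m + n := by
  intro m n _ _
  obtain ⟨a₁, b₁, a₂, b₂, _, _, φ₁, φ₂, φ₃, h₁, h₂, -, hI₁, hI₂, hφ₁, hφ₂, -, hρ⟩ := hspec
  have hdist : ∀ s ∈ Set.Ioo a₁ b₁, ∀ t ∈ Set.Ioo a₂ b₂,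
      dist (γ₁ s) (γ₂ t) = √(φ₃ (φ₁ s + φ₂ t)) := fun s hs t ht ↦ by
    rw [← (hρ s hs t ht).2, Real.sqrt_sq (norm_nonneg _), dist_eq_norm]
  obtain ⟨P₁, P₂, hP₁, hP₂, hm, hn, hD⟩ := special_form_implies_few_distances_general
    isPreconnected_Ioo isPreconnected_Ioo (Set.Ioo_infinite h₁) (Set.Ioo_infinite h₂)
    (hinj₁.mono hI₁) (hinj₂.mono hI₂) hφ₁.continuousOn hφ₂.continuousOn
    (f := fun r ↦ √(φ₃ r)) hdist m n
  exact ⟨P₁, P₂, hP₁.trans (Set.image_mono hI₁), hP₂.trans (Set.image_mono hI₂), hm, hn,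
    hD.trans (Nat.sub_le _ _)⟩
end

section
/- Let μ ≠ 0 and D ≠ 0 be real numbers. Let ℓ = {(x, y, z) ∈ ℝ³ : x = μ·z ∧ y = 0} and let C = {(x, y, z) ∈ ℝ³ : x²/(μ² + 1) + y² = D ∧ z = 0}. Then every point p ∈ C satisfies (infDist p ℓ)² = D; in particular, C is contained in the cylinder of radius √D centered around the line ℓ. -/
/-!
The line passes through the origin with direction `v = (μ, 0, 1)`, so by Pythagoras the squared
distance from `p` to it is `‖p‖² - ⟪v, p⟫² / ‖v‖²`. For `p = (x, y, 0)` this equals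
`x² + y² - (μ x)² / (μ² + 1) = x² / (μ² + 1) + y²`, the left-hand side of the equation of the
ellipse.
-/

open scoped InnerProductSpace

section InnerProductSpace

variable {𝕜 E : Type*} [RCLike 𝕜] [NormedAddCommGroup E] [InnerProductSpace 𝕜 E]

theorem infDist_submodule_eq_norm_sub_starProjection (U : Submodule 𝕜 E)
    [U.HasOrthogonalProjection] (p : E) :
    Metric.infDist p U = ‖p - U.starProjection p‖ := by
  simp only [U.starProjection_minimal p, Metric.infDist_eq_iInf, SetLike.coe_sort_coe,
    dist_eq_norm]

theorem infDist_submodule_sq (U : Submodule 𝕜 E) [U.HasOrthogonalProjection] (p : E) :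
    Metric.infDist p U ^ 2 = ‖p‖ ^ 2 - ‖U.starProjection p‖ ^ 2 := by
  rw [infDist_submodule_eq_norm_sub_starProjection, ← U.starProjection_orthogonal_val,
    U.norm_sq_eq_add_norm_sq_starProjection p, add_sub_cancel_left]

variable (𝕜) in
theorem infDist_span_singleton_sq (v p : E) :
    Metric.infDist p (𝕜 ∙ v) ^ 2 = ‖p‖ ^ 2 - ‖⟪v, p⟫_𝕜‖ ^ 2 / ‖v‖ ^ 2 := by
  have norm_proj_sq : ‖(𝕜 ∙ v).starProjection p‖ ^ 2 = ‖⟪v, p⟫_𝕜‖ ^ 2 / ‖v‖ ^ 2 := by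
    obtain rfl | hv := eq_or_ne v 0
    · simp
    · rw [Submodule.starProjection_singleton, norm_smul, norm_div, RCLike.norm_ofReal,
        abs_of_nonneg (by positivity)]
      field_simp
  rw [infDist_submodule_sq, norm_proj_sq]

end InnerProductSpace

/-- The line through the origin of `ℝ³` with direction `(μ, 0, 1)`, taken as a subspace so that the
distance to it is given by orthogonal projection. -/
noncomputable def tiltedLine (μ : ℝ) : Submodule ℝ (EuclideanSpace ℝ (Fin 3)) :=
  ℝ ∙ !₂[μ, 0, 1]

theorem coe_tiltedLine (μ : ℝ) :
    (tiltedLine μ : Set (EuclideanSpace ℝ (Fin 3))) = {v | v 0 = μ * v 2 ∧ v 1 = 0} := by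
  ext v
  simp only [tiltedLine, SetLike.mem_coe, Submodule.mem_span_singleton, Set.mem_ofPred_eq]
  constructor
  · rintro ⟨t, rfl⟩
    simp [mul_comm]
  · rintro ⟨h0, h1⟩
    refine ⟨v 2, ?_⟩
    ext i
    fin_cases i <;> simp [h0, h1, mul_comm]

theorem infDist_tiltedLine_sq (μ : ℝ) (p : EuclideanSpace ℝ (Fin 3)) :
    Metric.infDist p (tiltedLine μ) ^ 2 = (p 0 - μ * p 2) ^ 2 / (μ ^ 2 + 1) + p 1 ^ 2 := by
  have norm_direction_sq : ‖!₂[μ, 0, 1]‖ ^ 2 = μ ^ 2 + 1 := by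
    simp [EuclideanSpace.real_norm_sq_eq, Fin.sum_univ_three]
  have inner_direction : ⟪!₂[μ, 0, 1], p⟫_ℝ = μ * p 0 + p 2 := by
    simp [PiLp.inner_apply, Fin.sum_univ_three, mul_comm]
  calc Metric.infDist p (tiltedLine μ) ^ 2
      = ‖p‖ ^ 2 - ‖⟪!₂[μ, 0, 1], p⟫_ℝ‖ ^ 2 / ‖!₂[μ, 0, 1]‖ ^ 2 := infDist_span_singleton_sq ℝ _ p
    _ = p 0 ^ 2 + p 1 ^ 2 + p 2 ^ 2 - (μ * p 0 + p 2) ^ 2 / (μ ^ 2 + 1) := by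
      rw [norm_direction_sq, inner_direction, EuclideanSpace.real_norm_sq_eq, Fin.sum_univ_three,
        Real.norm_eq_abs, sq_abs]
    _ = (p 0 - μ * p 2) ^ 2 / (μ ^ 2 + 1) + p 1 ^ 2 := by
      field_simp
      ring

theorem ellipse_in_cylinder
    (μ D : ℝ) (hμ : μ ≠ 0) (hD : D ≠ 0)
    (ℓ C : Set (EuclideanSpace ℝ (Fin 3)))
    (hℓ : ℓ = {v | v 0 = μ * v 2 ∧ v 1 = 0})
    (hC : C = {v | (v 0) ^ 2 / (μ ^ 2 + 1) + (v 1) ^ 2 = D ∧ v 2 = 0}) :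
    (∀ p ∈ C, (Metric.infDist p ℓ) ^ 2 = D) ∧
      C ⊆ {x | Metric.infDist x ℓ = Real.sqrt D} := by
  have infDist_sq : ∀ p ∈ C, Metric.infDist p ℓ ^ 2 = D := by
    intro p hp
    obtain ⟨ellipse_eq, p_two⟩ := hC ▸ hp
    rw [hℓ, ← coe_tiltedLine, infDist_tiltedLine_sq, p_two, mul_zero, sub_zero, ellipse_eq]
  refine ⟨infDist_sq, fun p hp => ?_⟩
  rw [Set.mem_ofPred_eq, ← infDist_sq p hp, Real.sqrt_sq Metric.infDist_nonneg]
end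

section
/- Let I₁, I₂ ⊆ ℝ be nonempty open intervals and let f : I₁ → ℝ and g : I₂ → ℝ be smooth. Define σ(s,t) = (s − t)² + f(s)² + g(t)² for (s,t) ∈ I₁ × I₂, so that σ_s(s,t) = 2(s − t) + 2f(s)f'(s) and σ_t(s,t) = 2(t − s) + 2g(t)g'(t). Assume σ_s and σ_t are nowhere zero on I₁ × I₂ and that the mixed second partial derivative ∂²/∂s∂t of the function (s,t) ↦ ln|σ_s(s,t)/σ_t(s,t)| vanishes identically on I₁ × I₂. Then there exist A₁, A₂, A₃ ∈ ℝ such that one of the following holds: (i) A₂ ≠ 0, f(s)·f'(s) = A₁ + A₂·s − s for all s ∈ I₁, and g(t)·g'(t) = −A₁/A₂ + t/A₂ − t for all t ∈ I₂; or (ii) f(s)·f'(s) = A₁/(s + A₂) + A₃ − s for all s ∈ I₁ and g(t)·g'(t) = A₁/(t − A₃) − A₂ − t for all t ∈ I₂, where moreover, if A₁ ≠ 0, then s + A₂ ≠ 0 for all s ∈ I₁ and t − A₃ ≠ 0 for all t ∈ I₂. -/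
/-!
Put `F s = s + φ s` and `G t = t + ψ t`, where `φ = f f'` and `ψ = g g'`, so that
`σ_s = 2 (F s - t)` and `σ_t = 2 (G t - s)`. The `s`-derivative of `ln |σ_s / σ_t|` is
`F' s / (F s - t) + 1 / (G t - s)`, and by hypothesis it does not depend on `t`. Solving for `G t`
with `s` fixed places all the points `(G t, t)` on one Möbius curve through `(s, F s)` with slope
`F' s`. If some `F' s` vanishes, then `G` is constant and `F'` vanishes identically. Otherwise the
Möbius curves belonging to different `s` share infinitely many points, hence coincide, so the
points `(s, F s)` and `(G t, t)` all lie on a single curve, which is a line or a hyperbola with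
asymptotes parallel to the axes.
-/

open Set Topology

section MoebiusCurve

variable {K : Type*} [Field K]

/-- The graph of the Möbius transformation which passes through `z₀` with slope `p` and has its pole
at `z₀.1 + c⁻¹` (no pole if `c = 0`). The equation is free of division, so that no junk value occurs
at the pole; for `p = 0` it describes a horizontal line, with a vertical one added if `c ≠ 0`. -/
def moebiusCurve (z₀ : K × K) (p c : K) : Set (K × K) :=
  {z | z.2 - z₀.2 = (z.1 - z₀.1) * (p + c * (z.2 - z₀.2))}

variable {z₀ : K × K} {p c : K}

lemma mem_moebiusCurve {x y : K} :
    (x, y) ∈ moebiusCurve z₀ p c ↔ y - z₀.2 = (x - z₀.1) * (p + c * (y - z₀.2)) :=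
  Iff.rfl

lemma mem_moebiusCurve_of_div_add_inv_eq {x y : K} (hx : x - z₀.1 ≠ 0) (hy : z₀.2 - y ≠ 0)
    (h : p / (z₀.2 - y) + (x - z₀.1)⁻¹ = c) : (x, y) ∈ moebiusCurve z₀ p c := by
  rw [mem_moebiusCurve, ← h]
  field_simp
  ring

lemma fst_eq_of_mem_moebiusCurve_zero {x y : K} (hy : z₀.2 - y ≠ 0)
    (h : (x, y) ∈ moebiusCurve z₀ 0 c) : x = z₀.1 + c⁻¹ := by
  have hinv : (x - z₀.1) * c = 1 := mul_right_cancel₀ hy <| by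
    linear_combination mem_moebiusCurve.mp h
  rw [← eq_inv_of_mul_eq_one_left hinv]
  ring

lemma slope_eq_zero_of_mem_moebiusCurve {x y y' : K} (hx : x - z₀.1 ≠ 0) (hy : y ≠ y')
    (h : (x, y) ∈ moebiusCurve z₀ p c) (h' : (x, y') ∈ moebiusCurve z₀ p c) : p = 0 := by
  rw [mem_moebiusCurve] at h h'
  have hinv : (x - z₀.1) * c = 1 := mul_right_cancel₀ (sub_ne_zero.mpr hy) <| by
    linear_combination h' - h
  refine (mul_eq_zero.mp ?_).resolve_left hx
  linear_combination -h - (y - z₀.2) * hinv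

lemma mem_moebiusCurve_of_infinite {z₁ : K × K} {p₁ c₁ : K} (hp : p ≠ 0) {J : Set K}
    (hJ : J.Infinite) {G : K → K} (h : ∀ t ∈ J, (G t, t) ∈ moebiusCurve z₀ p c)
    (h₁ : ∀ t ∈ J, (G t, t) ∈ moebiusCurve z₁ p₁ c₁) : z₀ ∈ moebiusCurve z₁ p₁ c₁ := by
  -- Eliminating `G t` leaves an identity between polynomials in `t`, which may be evaluated
  -- at `t = z₀.2` even if `z₀.2 ∉ J`.
  let rise (z : K × K) : Polynomial K := .X - .C z.2
  let factor (z : K × K) (q d : K) : Polynomial K := .C q + .C d * rise z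
  have hpoly : .C (z₀.1 - z₁.1) * factor z₀ p c * factor z₁ p₁ c₁
      = rise z₁ * factor z₀ p c - rise z₀ * factor z₁ p₁ c₁ := by
    refine Polynomial.eq_of_infinite_eval_eq _ _ (hJ.mono fun t ht ↦ ?_)
    have ht₀ := mem_moebiusCurve.mp (h t ht)
    have ht₁ := mem_moebiusCurve.mp (h₁ t ht)
    simp only [mem_ofPred_eq, rise, factor, Polynomial.eval_mul, Polynomial.eval_add,
      Polynomial.eval_sub, Polynomial.eval_C, Polynomial.eval_X]
    linear_combination (p₁ + c₁ * (t - z₁.2)) * ht₀ - (p + c * (t - z₀.2)) * ht₁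
  have heval := congrArg (Polynomial.eval z₀.2) hpoly
  simp only [rise, factor, Polynomial.eval_mul, Polynomial.eval_add, Polynomial.eval_sub,
    Polynomial.eval_C, Polynomial.eval_X] at heval
  refine mul_right_cancel₀ hp ?_
  linear_combination -heval

lemma moebiusCurve_eq_line_or_hyperbola (hp : p ≠ 0) :
    (∃ A₁ A₂ : K, A₂ ≠ 0 ∧ moebiusCurve z₀ p c = {z | z.2 = A₁ + A₂ * z.1}) ∨
      ∃ A₁ A₂ A₃ : K, A₁ ≠ 0 ∧ moebiusCurve z₀ p c = {z | (z.1 + A₂) * (z.2 - A₃) = A₁} := by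
  obtain rfl | hc := eq_or_ne c 0
  · refine .inl ⟨z₀.2 - p * z₀.1, p, hp, ext fun ⟨x, y⟩ ↦ ?_⟩
    rw [mem_moebiusCurve, mem_ofPred_eq]
    constructor <;> intro h <;> linear_combination h
  · refine .inr ⟨-p / c ^ 2, -z₀.1 - 1 / c, z₀.2 - p / c, by simp [hp, hc], ext fun ⟨x, y⟩ ↦ ?_⟩
    rw [mem_moebiusCurve, mem_ofPred_eq]
    field_simp
    constructor <;> intro h
    · linear_combination -c * h
    · exact mul_left_cancel₀ hc (by linear_combination -h)

theorem slope_eq_zero_or_exists_common_moebiusCurve {I J : Set K} (hI : I.Nonempty)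
    (hJ : J.Infinite) {F G p : K → K} (hF : ∀ s ∈ I, ∀ t ∈ J, F s - t ≠ 0)
    (hG : ∀ s ∈ I, ∀ t ∈ J, G t - s ≠ 0)
    (h : ∀ s ∈ I, ∃ c, ∀ t ∈ J, (G t, t) ∈ moebiusCurve (s, F s) (p s) c) :
    ((∀ s ∈ I, p s = 0) ∧ ∃ x, ∀ t ∈ J, G t = x) ∨
      ∃ z₀ q d, q ≠ 0 ∧ (∀ s ∈ I, (s, F s) ∈ moebiusCurve z₀ q d) ∧
        ∀ t ∈ J, (G t, t) ∈ moebiusCurve z₀ q d := by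
  by_cases hp : ∃ s ∈ I, p s = 0
  · obtain ⟨s₀, hs₀, hp₀⟩ := hp
    obtain ⟨c₀, hc₀⟩ := h s₀ hs₀
    have hGconst : ∀ t ∈ J, G t = s₀ + c₀⁻¹ := fun t ht ↦
      fst_eq_of_mem_moebiusCurve_zero (hF s₀ hs₀ t ht) (hp₀ ▸ hc₀ t ht)
    refine .inl ⟨fun s hs ↦ ?_, _, hGconst⟩
    obtain ⟨c, hc⟩ := h s hs
    obtain ⟨t, ht, t', ht', hne⟩ := hJ.nontrivial
    have hGt : G t' = G t := (hGconst t' ht').trans (hGconst t ht).symm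
    exact slope_eq_zero_of_mem_moebiusCurve (hG s hs t ht) hne (hc t ht) (hGt ▸ hc t' ht')
  · push Not at hp
    obtain ⟨s₀, hs₀⟩ := hI
    obtain ⟨c₀, hc₀⟩ := h s₀ hs₀
    refine .inr ⟨(s₀, F s₀), p s₀, c₀, hp s₀ hs₀, fun s hs ↦ ?_, hc₀⟩
    obtain ⟨c, hc⟩ := h s hs
    exact mem_moebiusCurve_of_infinite (hp s hs) hJ hc hc₀

end MoebiusCurve

section Calculus

lemma differentiableOn_mul_deriv {𝕜 𝔸 : Type*} [NontriviallyNormedField 𝕜] [NormedRing 𝔸]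
    [NormedAlgebra 𝕜 𝔸] {f : 𝕜 → 𝔸} {I : Set 𝕜} (hI : IsOpen I) (hf : ContDiffOn 𝕜 2 f I) :
    DifferentiableOn 𝕜 (fun s ↦ f s * deriv f s) I :=
  (hf.differentiableOn two_ne_zero).fun_mul
    ((hf.deriv_of_isOpen hI (m := 1) (by norm_num)).differentiableOn one_ne_zero)

variable {𝕜 : Type*} [RCLike 𝕜]

lemma exists_eq_const_of_mixed_deriv_eq_zero {E : Type*} [NormedAddCommGroup E] [NormedSpace 𝕜 E]
    {J : Set 𝕜} (hJ : IsOpen J) (hJc : IsPreconnected J) {u : 𝕜 → 𝕜 → E} {v : 𝕜 → E} {s : 𝕜}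
    (hu : ∀ t ∈ J, HasDerivAt (fun s' ↦ u s' t) (v t) s) (hv : DifferentiableOn 𝕜 v J)
    (hmixed : ∀ t ∈ J, deriv (fun t' ↦ deriv (fun s' ↦ u s' t') s) t = 0) :
    ∃ c, ∀ t ∈ J, v t = c :=
  hJ.exists_is_const_of_deriv_eq_zero hJc hv fun t ht ↦ by
    rw [← (show EqOn (fun t' ↦ deriv (fun s' ↦ u s' t') s) v J from
      fun t' ht' ↦ (hu t' ht').deriv).deriv hJ ht]
    exact hmixed t ht

lemma hasDerivAt_log_abs_div_sub {F : ℝ → ℝ} {F' s t y : ℝ} (hF : HasDerivAt F F' s)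
    (ht : F s - t ≠ 0) (hy : y - s ≠ 0) :
    HasDerivAt (fun s' ↦ Real.log |(F s' - t) / (y - s')|) (F' / (F s - t) + (y - s)⁻¹) s := by
  simp only [Real.log_abs]
  convert ((hF.sub_const t).fun_div ((hasDerivAt_id' s).const_sub y) hy).log
    (div_ne_zero ht hy) using 1
  field_simp
  ring

lemma exists_forall_mem_moebiusCurve_of_mixed_deriv_eq_zero {J : Set ℝ} (hJ : IsOpen J)
    (hJc : IsPreconnected J) {F G : ℝ → ℝ} {s : ℝ} (hF : DifferentiableAt ℝ F s)
    (hG : DifferentiableOn ℝ G J) (hF0 : ∀ t ∈ J, F s - t ≠ 0) (hG0 : ∀ t ∈ J, G t - s ≠ 0)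
    {u : ℝ → ℝ → ℝ} (hu : ∀ t ∈ J, ∀ᶠ s' in 𝓝 s, u s' t = Real.log |(F s' - t) / (G t - s')|)
    (hmixed : ∀ t ∈ J, deriv (fun t' ↦ deriv (fun s' ↦ u s' t') s) t = 0) :
    ∃ c, ∀ t ∈ J, (G t, t) ∈ moebiusCurve (s, F s) (deriv F s) c := by
  have hv : DifferentiableOn ℝ (fun t ↦ deriv F s / (F s - t) + (G t - s)⁻¹) J :=
    ((differentiableOn_const _).div (differentiableOn_id.const_sub _) hF0).add
      ((hG.sub_const s).inv hG0)
  obtain ⟨c, hc⟩ := exists_eq_const_of_mixed_deriv_eq_zero hJ hJc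
    (fun t ht ↦ (hasDerivAt_log_abs_div_sub hF.hasDerivAt (hF0 t ht)
      (hG0 t ht)).congr_of_eventuallyEq (hu t ht)) hv hmixed
  exact ⟨c, fun t ht ↦ mem_moebiusCurve_of_div_add_inv_eq (hG0 t ht) (hF0 t ht) (hc t ht)⟩

theorem exists_affine_or_homographic {I J : Set 𝕜} (hI : IsOpen I) (hIc : IsConnected I)
    (hJ : J.Infinite) {F G : 𝕜 → 𝕜} (hFd : DifferentiableOn 𝕜 F I)
    (hF : ∀ s ∈ I, ∀ t ∈ J, F s - t ≠ 0) (hG : ∀ s ∈ I, ∀ t ∈ J, G t - s ≠ 0)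
    (h : ∀ s ∈ I, ∃ c, ∀ t ∈ J, (G t, t) ∈ moebiusCurve (s, F s) (deriv F s) c) :
    ∃ A₁ A₂ A₃ : 𝕜,
      (A₂ ≠ 0 ∧ (∀ s ∈ I, F s = A₁ + A₂ * s) ∧ ∀ t ∈ J, G t = -A₁ / A₂ + t / A₂) ∨
      ((∀ s ∈ I, F s = A₁ / (s + A₂) + A₃) ∧ (∀ t ∈ J, G t = A₁ / (t - A₃) - A₂) ∧
        (A₁ ≠ 0 → (∀ s ∈ I, s + A₂ ≠ 0) ∧ ∀ t ∈ J, t - A₃ ≠ 0)) := by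
  obtain ⟨hF', x, hx⟩ | ⟨z₀, p, c, hp, hFmem, hGmem⟩ :=
    slope_eq_zero_or_exists_common_moebiusCurve hIc.nonempty hJ hF hG h
  · obtain ⟨y, hy⟩ := hI.exists_is_const_of_deriv_eq_zero hIc.isPreconnected hFd hF'
    exact ⟨0, -x, y, .inr ⟨by simpa using hy, by simpa using hx, absurd rfl⟩⟩
  obtain ⟨A₁, A₂, hA₂, heq⟩ | ⟨A₁, A₂, A₃, hA₁, heq⟩ :=
    moebiusCurve_eq_line_or_hyperbola (z₀ := z₀) (c := c) hp <;>
    simp only [heq, mem_ofPred_eq] at hFmem hGmem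
  · refine ⟨A₁, A₂, 0, .inl ⟨hA₂, hFmem, fun t ht ↦ ?_⟩⟩
    field_simp
    linear_combination -hGmem t ht
  · have hs0 : ∀ s ∈ I, s + A₂ ≠ 0 := fun s hs ↦ left_ne_zero_of_mul (hFmem s hs ▸ hA₁)
    have ht0 : ∀ t ∈ J, t - A₃ ≠ 0 := fun t ht ↦ right_ne_zero_of_mul (hGmem t ht ▸ hA₁)
    refine ⟨A₁, A₂, A₃, .inr ⟨fun s hs ↦ ?_, fun t ht ↦ ?_, fun _ ↦ ⟨hs0, ht0⟩⟩⟩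
    · rw [← hFmem s hs, mul_div_cancel_left₀ _ (hs0 s hs), sub_add_cancel]
    · rw [← hGmem t ht, mul_div_cancel_right₀ _ (ht0 t ht), add_sub_cancel_right]

end Calculus

theorem important_lemma_general {I J : Set ℝ} (hI : IsOpen I) (hIc : IsConnected I)
    (hJ : IsOpen J) (hJc : IsConnected J) {φ ψ : ℝ → ℝ} (hφ : DifferentiableOn ℝ φ I)
    (hψ : DifferentiableOn ℝ ψ J) {σs σt : ℝ → ℝ → ℝ}
    (hσs : ∀ s ∈ I, ∀ t ∈ J, σs s t = 2 * (s - t) + 2 * φ s)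
    (hσt : ∀ s ∈ I, ∀ t ∈ J, σt s t = 2 * (t - s) + 2 * ψ t)
    (hσs0 : ∀ s ∈ I, ∀ t ∈ J, σs s t ≠ 0) (hσt0 : ∀ s ∈ I, ∀ t ∈ J, σt s t ≠ 0)
    (hmixed : ∀ s ∈ I, ∀ t ∈ J,
      deriv (fun t' ↦ deriv (fun s' ↦ Real.log |σs s' t' / σt s' t'|) s) t = 0) :
    ∃ A₁ A₂ A₃ : ℝ,
      (A₂ ≠ 0 ∧ (∀ s ∈ I, φ s = A₁ + A₂ * s - s) ∧ ∀ t ∈ J, ψ t = -A₁ / A₂ + t / A₂ - t) ∨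
      ((∀ s ∈ I, φ s = A₁ / (s + A₂) + A₃ - s) ∧ (∀ t ∈ J, ψ t = A₁ / (t - A₃) - A₂ - t) ∧
        (A₁ ≠ 0 → (∀ s ∈ I, s + A₂ ≠ 0) ∧ ∀ t ∈ J, t - A₃ ≠ 0)) := by
  have hσs' : ∀ s ∈ I, ∀ t ∈ J, σs s t = 2 * (s + φ s - t) := fun s hs t ht ↦ by
    rw [hσs s hs t ht]; ring
  have hσt' : ∀ s ∈ I, ∀ t ∈ J, σt s t = 2 * (t + ψ t - s) := fun s hs t ht ↦ by
    rw [hσt s hs t ht]; ring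
  have hF0 : ∀ s ∈ I, ∀ t ∈ J, s + φ s - t ≠ 0 := fun s hs t ht ↦
    right_ne_zero_of_mul (hσs' s hs t ht ▸ hσs0 s hs t ht)
  have hG0 : ∀ s ∈ I, ∀ t ∈ J, t + ψ t - s ≠ 0 := fun s hs t ht ↦
    right_ne_zero_of_mul (hσt' s hs t ht ▸ hσt0 s hs t ht)
  have hF : DifferentiableOn ℝ (fun s ↦ s + φ s) I := differentiableOn_id.fun_add hφ
  have hG : DifferentiableOn ℝ (fun t ↦ t + ψ t) J := differentiableOn_id.fun_add hψ
  have hJinf : J.Infinite :=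
    have ⟨t, ht⟩ := hJc.nonempty
    infinite_of_mem_nhds t (hJ.mem_nhds ht)
  have hcurve : ∀ s ∈ I, ∃ c, ∀ t ∈ J,
      (t + ψ t, t) ∈ moebiusCurve (s, s + φ s) (deriv (fun s ↦ s + φ s) s) c := by
    intro s hs
    refine exists_forall_mem_moebiusCurve_of_mixed_deriv_eq_zero hJ hJc.isPreconnected
      (hF.differentiableAt (hI.mem_nhds hs)) hG (hF0 s hs) (hG0 s hs) (fun t ht ↦ ?_) (hmixed s hs)
    filter_upwards [hI.mem_nhds hs] with s' hs'
    rw [hσs' s' hs' t ht, hσt' s' hs' t ht, mul_div_mul_left _ _ two_ne_zero]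
  simpa only [eq_sub_iff_add_eq'] using
    exists_affine_or_homographic hI hIc hJinf hF hF0 hG0 hcurve

theorem important_lemma
    (a₁ b₁ a₂ b₂ : ℝ) (h₁ : a₁ < b₁) (h₂ : a₂ < b₂)
    (f g : ℝ → ℝ)
    (hf : ContDiffOn ℝ (⊤ : ℕ∞) f (Set.Ioo a₁ b₁))
    (hg : ContDiffOn ℝ (⊤ : ℕ∞) g (Set.Ioo a₂ b₂))
    (σs σt : ℝ → ℝ → ℝ)
    (hσs : ∀ s t : ℝ, σs s t = 2 * (s - t) + 2 * f s * deriv f s)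
    (hσt : ∀ s t : ℝ, σt s t = 2 * (t - s) + 2 * g t * deriv g t)
    (hσs0 : ∀ s ∈ Set.Ioo a₁ b₁, ∀ t ∈ Set.Ioo a₂ b₂, σs s t ≠ 0)
    (hσt0 : ∀ s ∈ Set.Ioo a₁ b₁, ∀ t ∈ Set.Ioo a₂ b₂, σt s t ≠ 0)
    (hmixed : ∀ s ∈ Set.Ioo a₁ b₁, ∀ t ∈ Set.Ioo a₂ b₂,
      deriv (fun t' => deriv (fun s' => Real.log |σs s' t' / σt s' t'|) s) t = 0) :
    ∃ A₁ A₂ A₃ : ℝ,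
      (A₂ ≠ 0 ∧
        (∀ s ∈ Set.Ioo a₁ b₁, f s * deriv f s = A₁ + A₂ * s - s) ∧
        (∀ t ∈ Set.Ioo a₂ b₂, g t * deriv g t = -A₁ / A₂ + t / A₂ - t)) ∨
      ((∀ s ∈ Set.Ioo a₁ b₁, f s * deriv f s = A₁ / (s + A₂) + A₃ - s) ∧
        (∀ t ∈ Set.Ioo a₂ b₂, g t * deriv g t = A₁ / (t - A₃) - A₂ - t) ∧
        (A₁ ≠ 0 →
          (∀ s ∈ Set.Ioo a₁ b₁, s + A₂ ≠ 0) ∧ (∀ t ∈ Set.Ioo a₂ b₂, t - A₃ ≠ 0))) :=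
  important_lemma_general isOpen_Ioo (isConnected_Ioo h₁) isOpen_Ioo (isConnected_Ioo h₂)
    (differentiableOn_mul_deriv isOpen_Ioo (hf.of_le (by norm_cast)))
    (differentiableOn_mul_deriv isOpen_Ioo (hg.of_le (by norm_cast)))
    (fun s _ t _ ↦ by rw [hσs, mul_assoc 2 (f s)]) (fun s _ t _ ↦ by rw [hσt, mul_assoc 2 (g t)])
    hσs0 hσt0 hmixed
end
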